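/- Let R be a commutative ring and n ≥ 2. Every monomial matrix g ∈ SL(n,R) (each row and column has exactly one nonzero entry, which is a unit, and det g = 1) lies in U(n,R)·U⁻(n,R)·U(n,R)·U⁻(n,R). -/

import Mathlib

/-!
The proof is by induction on the size of `g`, reducing to a Schur complement.
Write `g = [a, β; γ, M]` with `a` the corner entry. If a row vector `ρ` and a column vector `σ`
satisfy `a + ργ + βσ + ρMσ = 1`, then adding `ρ`-multiples of the lower rows to the top row and
`σ`-multiples of the right columns to the first column makes the corner `1`; eliminating with this
corner leaves the Schur complement `S = M - (γ + Mσ)(β + ρM)`, and `det S = det g`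
(`bordered_eq_mul`). A factorisation `S = u₁ l₁ u₂ l₂` lifts to one of `g`
(`exists_factorization_of_schur`), because block-diagonal matrices `diag(1, u)` and `diag(1, l)`
can be moved past the elimination factors.

It remains to choose `ρ, σ` so that `S` is again monomial (`IsMonomialUnit.exists_schur`).
If `a = 0`, let `ε` be the unit in the first column, in row `i` of `M`; take `ρ = ε⁻¹ eᵢ` and
`σ = 0`; then `S` is `M` with one more unit, which fills its empty row `i` and its empty column.
If `a` is a unit, take `ρ = eᵢ` for any row `i` of `M` and `σ = x eⱼ`, where `m = M i j` is the
unit in that row and `x m = 1 - a`; then `S` is `M` with `m` replaced by `a m`.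
The induction ends with size `1`, where `det g = 1` says `g = 1`.
-/

/-- Upper unitriangular square matrix. -/
def IsUpperUnitriangular {n : ℕ} {R : Type*} [CommRing R]
    (M : Matrix (Fin n) (Fin n) R) : Prop :=
  (∀ i, M i i = 1) ∧ ∀ i j : Fin n, j < i → M i j = 0

/-- Lower unitriangular square matrix. -/
def IsLowerUnitriangular {n : ℕ} {R : Type*} [CommRing R]
    (M : Matrix (Fin n) (Fin n) R) : Prop :=
  (∀ i, M i i = 1) ∧ ∀ i j : Fin n, i < j → M i j = 0

open Matrix

/-- The block matrix `[a, b; c, D]` whose corner block has size `1`. -/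
def bordered {n : ℕ} {R : Type*} (a : R) (b c : Fin n → R) (D : Matrix (Fin n) (Fin n) R) :
    Matrix (Fin (n + 1)) (Fin (n + 1)) R :=
  Matrix.of (Fin.cons (Fin.cons a b) (fun i => Fin.cons (c i) (D i)))

section bordered

variable {n : ℕ} {R : Type*} (a : R) (b c : Fin n → R) (D : Matrix (Fin n) (Fin n) R)

@[simp] lemma bordered_zero_zero : bordered a b c D 0 0 = a := rfl

@[simp] lemma bordered_zero_succ (j : Fin n) : bordered a b c D 0 j.succ = b j := rfl

@[simp] lemma bordered_succ_zero (i : Fin n) : bordered a b c D i.succ 0 = c i := rfl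

@[simp] lemma bordered_succ_succ (i j : Fin n) : bordered a b c D i.succ j.succ = D i j := rfl

lemma eq_bordered (g : Matrix (Fin (n + 1)) (Fin (n + 1)) R) :
    g = bordered (g 0 0) (fun j => g 0 j.succ) (fun i => g i.succ 0)
      (fun i j => g i.succ j.succ) := by
  ext i j
  cases i using Fin.cases <;> cases j using Fin.cases <;> rfl

variable [CommRing R]

lemma bordered_mul (a' : R) (b' c' : Fin n → R) (D' : Matrix (Fin n) (Fin n) R) :
    bordered a b c D * bordered a' b' c' D' =
      bordered (a * a' + b ⬝ᵥ c') (a • b' + b ᵥ* D') (a' • c + D *ᵥ c')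
        (vecMulVec c b' + D * D') := by
  ext i j
  cases i using Fin.cases <;> cases j using Fin.cases <;>
    simp [Matrix.mul_apply, Fin.sum_univ_succ, dotProduct, vecMul, mulVec, vecMulVec_apply,
      mul_comm]

lemma det_bordered_of_col : (bordered 1 b 0 D).det = D.det := by
  rw [det_succ_column_zero, Fin.sum_univ_succ]
  simp
  rfl

lemma det_bordered_of_row : (bordered 1 0 c D).det = D.det := by
  rw [det_succ_row_zero, Fin.sum_univ_succ]
  simp
  rfl

variable {D}

lemma IsUpperUnitriangular.bordered (h : IsUpperUnitriangular D) :
    IsUpperUnitriangular (bordered 1 b 0 D) := by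
  refine ⟨fun i => ?_, fun i j hij => ?_⟩
  · cases i using Fin.cases <;> simp [h.1]
  · cases i using Fin.cases <;> cases j using Fin.cases <;> simp at hij ⊢
    exact h.2 _ _ hij

lemma IsLowerUnitriangular.bordered (h : IsLowerUnitriangular D) :
    IsLowerUnitriangular (bordered 1 0 c D) := by
  refine ⟨fun i => ?_, fun i j hij => ?_⟩
  · cases i using Fin.cases <;> simp [h.1]
  · cases i using Fin.cases <;> cases j using Fin.cases <;> simp at hij ⊢
    exact h.2 _ _ hij

lemma IsUpperUnitriangular.det (h : IsUpperUnitriangular D) : D.det = 1 := by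
  rw [det_of_isUpperTriangular (fun i j hij => h.2 i j hij)]
  simp [h.1]

lemma IsLowerUnitriangular.det (h : IsLowerUnitriangular D) : D.det = 1 := by
  rw [det_of_isLowerTriangular D (fun i j hij => h.2 i j hij)]
  simp [h.1]

variable {a b c}

/-- Elimination with a corner made equal to `1` by `ρ` and `σ`; the third factor carries the
Schur complement. -/
lemma bordered_eq_mul {ρ σ : Fin n → R}
    (h : a + ρ ⬝ᵥ c + b ⬝ᵥ σ + ρ ⬝ᵥ (D *ᵥ σ) = 1) :
    bordered a b c D = bordered 1 (-ρ) 0 1 * bordered 1 0 (c + D *ᵥ σ) 1 *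
      bordered 1 (b + ρ ᵥ* D) 0 (D - vecMulVec (c + D *ᵥ σ) (b + ρ ᵥ* D)) *
      bordered 1 0 (-σ) 1 := by
  have hA : bordered 1 0 (c + D *ᵥ σ) 1 *
      bordered 1 (b + ρ ᵥ* D) 0 (D - vecMulVec (c + D *ᵥ σ) (b + ρ ᵥ* D)) =
      bordered 1 (b + ρ ᵥ* D) (c + D *ᵥ σ) D := by
    rw [bordered_mul]
    simp
  rw [mul_assoc (bordered 1 (-ρ) 0 1), hA, bordered_mul, bordered_mul]
  congr 1
  · have h' : ρ ᵥ* D ⬝ᵥ σ = ρ ⬝ᵥ (D *ᵥ σ) := (dotProduct_mulVec _ _ _).symm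
    simp only [one_smul, mul_one, neg_dotProduct, dotProduct_neg, dotProduct_add, add_dotProduct,
      neg_vecMul, h']
    linear_combination h
  · simp [neg_vecMul]
  · simp [mulVec_neg]
  · simp

/-- A factorisation of the Schur complement lifts to the whole matrix. -/
lemma exists_factorization_of_schur {ρ σ : Fin n → R}
    (h : a + ρ ⬝ᵥ c + b ⬝ᵥ σ + ρ ⬝ᵥ (D *ᵥ σ) = 1)
    (hS : ∃ u₁ l₁ u₂ l₂ : Matrix (Fin n) (Fin n) R,
      IsUpperUnitriangular u₁ ∧ IsLowerUnitriangular l₁ ∧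
      IsUpperUnitriangular u₂ ∧ IsLowerUnitriangular l₂ ∧
      D - vecMulVec (c + D *ᵥ σ) (b + ρ ᵥ* D) = u₁ * l₁ * u₂ * l₂) :
    ∃ u₁ l₁ u₂ l₂ : Matrix (Fin (n + 1)) (Fin (n + 1)) R,
      IsUpperUnitriangular u₁ ∧ IsLowerUnitriangular l₁ ∧
      IsUpperUnitriangular u₂ ∧ IsLowerUnitriangular l₂ ∧
      bordered a b c D = u₁ * l₁ * u₂ * l₂ := by
  obtain ⟨u₁, l₁, u₂, l₂, hu₁, hl₁, hu₂, hl₂, hS⟩ := hS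
  rw [bordered_eq_mul h, hS]
  -- Pulling `diag(1, u₁)` to the left of the column factor multiplies its border by `u₁⁻¹`, and
  -- pulling `diag(1, l₂)` to the right of the row factor multiplies its border by `l₂⁻¹`.
  generalize c + D *ᵥ σ = c'
  generalize b + ρ ᵥ* D = b'
  have hc : u₁ *ᵥ (u₁⁻¹ *ᵥ c') = c' := by
    rw [mulVec_mulVec, mul_nonsing_inv _ (by simp [hu₁.det]), one_mulVec]
  have hb : (b' ᵥ* l₂⁻¹) ᵥ* l₂ = b' := by
    rw [vecMul_vecMul, nonsing_inv_mul _ (by simp [hl₂.det]), vecMul_one]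
  refine ⟨bordered 1 (-ρ ᵥ* u₁) 0 u₁, bordered 1 0 (u₁⁻¹ *ᵥ c') l₁,
    bordered 1 (b' ᵥ* l₂⁻¹) 0 u₂, bordered 1 0 (l₂ *ᵥ -σ) l₂,
    hu₁.bordered _, hl₁.bordered _, hu₂.bordered _, hl₂.bordered _, ?_⟩
  have e₁ : bordered 1 (-ρ ᵥ* u₁) 0 u₁ = bordered 1 (-ρ) 0 1 * bordered 1 0 0 u₁ := by
    rw [bordered_mul]; simp
  have e₂ : bordered 1 0 0 u₁ * bordered 1 0 (u₁⁻¹ *ᵥ c') l₁ =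
      bordered 1 0 c' 1 * bordered 1 0 0 (u₁ * l₁) := by
    rw [bordered_mul, bordered_mul, hc]; simp
  have e₃ : bordered 1 0 0 (u₁ * l₁) * bordered 1 (b' ᵥ* l₂⁻¹) 0 u₂ * bordered 1 0 0 l₂ =
      bordered 1 b' 0 (u₁ * l₁ * u₂ * l₂) := by
    rw [bordered_mul, bordered_mul]
    simp only [one_smul, zero_vecMul, add_zero, hb]
    simp
  have e₄ : bordered 1 0 (l₂ *ᵥ -σ) l₂ = bordered 1 0 0 l₂ * bordered 1 0 (-σ) 1 := by
    rw [bordered_mul]; simp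
  rw [e₁, e₄, mul_assoc (bordered 1 (-ρ) 0 1) (bordered 1 0 0 u₁), e₂, ← e₃]
  simp only [mul_assoc]

end bordered

/-- Every row and every column has a unit entry, and zeros elsewhere. Over a nontrivial ring these
are the monomial matrices with unit entries. -/
def IsMonomialUnit {n : ℕ} {R : Type*} [CommRing R] (g : Matrix (Fin n) (Fin n) R) : Prop :=
  (∀ i, ∃ j, IsUnit (g i j) ∧ ∀ j', j' ≠ j → g i j' = 0) ∧
  (∀ j, ∃ i, IsUnit (g i j) ∧ ∀ i', i' ≠ i → g i' j = 0)

/-- The corner of a monomial matrix of size at least `2` (the index `i₀` rules out size `1`) can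
be made `1` so that the Schur complement is again monomial. -/
lemma IsMonomialUnit.exists_schur {n : ℕ} {R : Type*} [CommRing R] [Nontrivial R] {a : R}
    {b c : Fin n → R} {D : Matrix (Fin n) (Fin n) R} (i₀ : Fin n)
    (h : IsMonomialUnit (bordered a b c D)) :
    ∃ ρ σ : Fin n → R, a + ρ ⬝ᵥ c + b ⬝ᵥ σ + ρ ⬝ᵥ (D *ᵥ σ) = 1 ∧
      IsMonomialUnit (D - vecMulVec (c + D *ᵥ σ) (b + ρ ᵥ* D)) := by
  obtain ⟨hr, hc⟩ := h
  have h0 : ¬ IsUnit (0 : R) := not_isUnit_zero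
  simp only [Fin.forall_fin_succ, Fin.exists_fin_succ, bordered_zero_zero, bordered_zero_succ,
    bordered_succ_zero, bordered_succ_succ, ne_eq, not_true_eq_false, false_imp_iff, true_and,
    Fin.succ_ne_zero, (Fin.succ_ne_zero _).symm, not_false_eq_true, true_imp_iff,
    Fin.succ_inj] at hr hc
  obtain ⟨hr0, hr⟩ := hr
  obtain ⟨hc0, hc⟩ := hc
  rcases hc0 with ⟨ha, hc0⟩ | ⟨i, hi, rfl, hci⟩
  -- The corner is a unit, so the borders vanish and `D` is itself monomial.
  · have hb : b = 0 := by
      ext j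
      rcases hr0 with h | ⟨j, -, rfl, -⟩
      · exact h.2 j
      · exact absurd ha h0
    obtain rfl : c = 0 := funext hc0
    subst hb
    obtain ⟨j, ⟨m, hm⟩, hj⟩ : ∃ j, IsUnit (D i₀ j) ∧ ∀ j', ¬ j' = j → D i₀ j' = 0 := by
      rcases hr i₀ with ⟨h, -⟩ | ⟨j, hj, -, h⟩
      · exact absurd h h0
      · exact ⟨j, hj, h⟩
    have hcol : ∀ i, i ≠ i₀ → D i j = 0 := by
      intro i hi
      rcases hc j with ⟨h, -⟩ | ⟨k, hk, -, h⟩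
      · exact absurd h h0
      · by_cases hki : i₀ = k
        · exact h i (hki ▸ hi)
        · exact absurd (h i₀ hki ▸ hm ▸ m.isUnit) h0
    refine ⟨Pi.single i₀ 1, Pi.single j ((↑m⁻¹ : R) * (1 - a)), ?_, ?_⟩
    · simp [← hm]
    · have hS : ∀ k l, (D - vecMulVec (0 + D *ᵥ Pi.single j ((↑m⁻¹ : R) * (1 - a)))
          (0 + Pi.single i₀ 1 ᵥ* D) : Matrix (Fin n) (Fin n) R) k l =
          if k = i₀ ∧ l = j then a * m else D k l := by
        intro k l
        simp only [Matrix.sub_apply, vecMulVec_apply, zero_add, mulVec_single, single_one_vecMul,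
          Pi.smul_apply, Matrix.col_apply, Matrix.row_apply, MulOpposite.smul_eq_mul_unop,
          MulOpposite.unop_op]
        split_ifs with hkl
        · obtain ⟨rfl, rfl⟩ := hkl
          rw [← hm]
          linear_combination (a - 1) * (m : R) * m.mul_inv
        · by_cases hk : k = i₀
          · rw [hj l (fun h => hkl ⟨hk, h⟩)]; simp
          · rw [hcol k hk]; simp
      have ham : IsUnit (a * m) := ha.mul m.isUnit
      refine ⟨fun k => ?_, fun l => ?_⟩
      · simp only [hS]
        by_cases hk : k = i₀
        · exact ⟨j, by grind⟩
        · rcases hr k with ⟨h, -⟩ | ⟨l, hl, -, h⟩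
          · exact absurd h h0
          · exact ⟨l, by grind⟩
      · simp only [hS]
        by_cases hl : l = j
        · exact ⟨i₀, by grind⟩
        · rcases hc l with ⟨h, -⟩ | ⟨k, hk, -, h⟩
          · exact absurd h h0
          · exact ⟨k, by grind⟩
  -- The corner is `0`, so row `i` and column `j` of `D` vanish, where `c i` and `b j` are units.
  · obtain ⟨j, hj, hj'⟩ : ∃ j, IsUnit (b j) ∧ ∀ j', ¬ j' = j → b j' = 0 := by
      rcases hr0 with ⟨h, -⟩ | ⟨j, hj, -, h⟩
      · exact absurd h h0
      · exact ⟨j, hj, h⟩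
    have hDi : ∀ l, D i l = 0 := by
      rcases hr i with ⟨-, h⟩ | ⟨l, -, h, -⟩
      · exact h
      · exact absurd (h ▸ hi) h0
    have hDj : ∀ k, D k j = 0 := by
      rcases hc j with ⟨-, h⟩ | ⟨l, -, h, -⟩
      · exact h
      · exact absurd (h ▸ hj) h0
    have hbc : IsUnit (- (c i * b j)) := (hi.mul hj).neg
    obtain ⟨e, he⟩ := hi
    refine ⟨Pi.single i ↑e⁻¹, 0, ?_, ?_⟩
    · simp [← he]
    · have hρ : Pi.single i (↑e⁻¹ : R) ᵥ* D = 0 := by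
        ext l
        simp [single_vecMul, hDi]
      have hS : ∀ k l, (D - vecMulVec (c + D *ᵥ 0) (b + Pi.single i (↑e⁻¹ : R) ᵥ* D)) k l =
          if k = i ∧ l = j then - (c i * b j) else D k l := by
        intro k l
        simp only [hρ, mulVec_zero, add_zero, Matrix.sub_apply, vecMulVec_apply]
        grind
      refine ⟨fun k => ?_, fun l => ?_⟩
      · simp only [hS]
        by_cases hk : k = i
        · exact ⟨j, by grind⟩
        · rcases hr k with ⟨h, -⟩ | ⟨l, hl, -, h⟩
          · exact absurd (hci k hk ▸ h) h0
          · exact ⟨l, by grind⟩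
      · simp only [hS]
        by_cases hl : l = j
        · exact ⟨i, by grind⟩
        · rcases hc l with ⟨h, -⟩ | ⟨k, hk, -, h⟩
          · exact absurd (hj' l hl ▸ h) h0
          · exact ⟨k, by grind⟩

/-- Every monomial matrix in `SL(n,R)` lies in `U·U⁻·U·U⁻`. -/
theorem monomial_mem_UUmUUm (n : ℕ) (hn : 2 ≤ n) (R : Type*) [CommRing R]
    (g : Matrix (Fin n) (Fin n) R) (hdet : g.det = 1)
    (hrow : ∀ i, ∃! j, g i j ≠ 0) (hcol : ∀ j, ∃! i, g i j ≠ 0)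
    (hunit : ∀ i j, g i j ≠ 0 → IsUnit (g i j)) :
    ∃ u₁ l₁ u₂ l₂ : Matrix (Fin n) (Fin n) R,
      IsUpperUnitriangular u₁ ∧ IsLowerUnitriangular l₁ ∧
      IsUpperUnitriangular u₂ ∧ IsLowerUnitriangular l₂ ∧
      g = u₁ * l₁ * u₂ * l₂ := by
  obtain ⟨m, rfl⟩ : ∃ m, n = m + 1 := ⟨n - 1, by omega⟩
  have : Nontrivial R := by
    obtain ⟨j, hj, -⟩ := hrow 0
    exact ⟨_, _, hj⟩
  have hg : IsMonomialUnit g := by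
    constructor
    · intro i
      obtain ⟨j, hj, hj'⟩ := hrow i
      exact ⟨j, hunit _ _ hj, fun k hk => by_contra fun h => hk (hj' k h)⟩
    · intro j
      obtain ⟨i, hi, hi'⟩ := hcol j
      exact ⟨i, hunit _ _ hi, fun k hk => by_contra fun h => hk (hi' k h)⟩
  clear hrow hcol hunit hn
  induction m with
  | zero =>
    have h1 : g = 1 := by
      ext i j
      rw [det_fin_one] at hdet
      fin_cases i; fin_cases j
      simpa using hdet
    refine ⟨1, 1, 1, 1, ?_, ?_, ?_, ?_, by simp [h1]⟩ <;>
      exact ⟨by simp, fun i j hij => by omega⟩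
  | succ m ih =>
    rw [eq_bordered g] at hg hdet ⊢
    obtain ⟨ρ, σ, h, hS⟩ := hg.exists_schur 0
    refine exists_factorization_of_schur h (ih _ ?_ hS)
    rw [bordered_eq_mul h] at hdet
    simpa [det_mul, det_bordered_of_col, det_bordered_of_row] using hdet
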